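/- For $p\in\mathbb{R}[x_1,\dots,x_n]$ let $\mathrm{Support}(p)\subseteq\mathbb{N}^n\subseteq\mathbb{R}^n$ be the set of exponent vectors of the monomials that appear in $p$ with nonzero coefficient, and let $\mathrm{New}(p)$ be the convex hull of $\mathrm{Support}(p)$ in $\mathbb{R}^n$. A face of a polytope $N\subseteq\mathbb{R}^n$ is understood to be nonempty and proper: it is a set $F$ with $\emptyset\neq F\subsetneq N$ for which there is an affine function $\pi$ on $\mathbb{R}^n$ with $\pi=0$ on $F$ and $\pi>0$ on $N\setminus F$. Call $p$ a convex cover polynomial if there are pairwise disjoint faces $F_1,\dots,F_u$ of $\mathrm{New}(p)$ with $\mathrm{Support}(p)\subseteq F_1\cup\dots\cup F_u$. The Motzkin polynomial $f = x_1^4x_2^2 + x_1^2x_2^4 - 3x_1^2x_2^2 + 1 \in \mathbb{R}[x_1,x_2]$ is not a convex cover polynomial; indeed, its support point $(2,2)$ lies in the interior (in $\mathbb{R}^2$) of its Newton polytope $\mathrm{New}(f) = \mathrm{conv}\{(0,0),(4,2),(2,4)\}$. -/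

import Mathlib

open MvPolynomial

noncomputable section

/-- View an exponent vector `a ∈ ℕⁿ` as a point of `ℝⁿ`. -/
def toR {n : ℕ} (a : Fin n →₀ ℕ) : Fin n → ℝ := fun i => (a i : ℝ)

/-- The Newton polytope of `p`: the convex hull of its support in `ℝⁿ`. -/
def newton {n : ℕ} (p : MvPolynomial (Fin n) ℝ) : Set (Fin n → ℝ) :=
  convexHull ℝ (toR '' (p.support : Set (Fin n →₀ ℕ)))

/-- `F` is a face of the polytope `N`. Faces of a `d`-dimensional polytope have dimensions
`0, …, d - 1`: they are nonempty and different from `N`. A face is cut out by a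
supporting hyperplane: some affine function vanishes on `F` and is positive on `N \ F`. -/
def IsFace {n : ℕ} (N F : Set (Fin n → ℝ)) : Prop :=
  F ⊆ N ∧ F.Nonempty ∧ F ≠ N ∧
    ∃ π : (Fin n → ℝ) →ᵃ[ℝ] ℝ, (∀ x ∈ F, π x = 0) ∧ ∀ x ∈ N \ F, 0 < π x

/-- `p` is a convex cover polynomial: some pairwise disjoint faces of `New(p)`
cover `Support(p)`. -/
def IsConvexCover {n : ℕ} (p : MvPolynomial (Fin n) ℝ) : Prop :=
  ∃ (u : ℕ) (F : Fin u → Set (Fin n → ℝ)),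
    (∀ i, IsFace (newton p) (F i)) ∧
    (∀ i j, i ≠ j → Disjoint (F i) (F j)) ∧
    toR '' (p.support : Set (Fin n →₀ ℕ)) ⊆ ⋃ i, F i

end

/-!
Among the exponents of the Motzkin polynomial, `(2, 2)` is the barycenter of the other three: the
polynomial is the AM-GM form of `x₁⁴x₂²`, `x₁²x₂⁴` and `1`. These three exponents are affinely
independent, so the Newton polytope is a triangle with `(2, 2)` in its interior. An affine function
that is nonnegative on the triangle and vanishes at an interior point has a local minimum there,
hence is constant. So no proper face contains `(2, 2)`.
-/

section Faces

theorem affineMap_apply_eq_of_isLocalMin {E : Type*} [AddCommGroup E] [TopologicalSpace E]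
    [Module ℝ E] [IsTopologicalAddGroup E] [ContinuousSMul ℝ E] {π : E →ᵃ[ℝ] ℝ} {x : E}
    (hx : IsLocalMin π x) (y : E) : π y = π x := by
  have hmin : ∀ z, π x ≤ π z := IsMinOn.of_isLocalMin_of_convex_univ hx
    ((convexOn_id convex_univ).comp_affineMap π)
  have hreflection : π (Equiv.pointReflection x y) = π x - π y + π x := by
    rw [Equiv.pointReflection_apply, AffineMap.map_vadd, AffineMap.linearMap_vsub, vsub_eq_sub,
      vadd_eq_add]
  linarith [hmin y, hmin (Equiv.pointReflection x y)]

variable {n : ℕ}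

theorem IsFace.disjoint_interior {N F : Set (Fin n → ℝ)} (hF : IsFace N F) :
    Disjoint F (interior N) := by
  obtain ⟨hFN, -, hne, π, hzero, hpos⟩ := hF
  refine Set.disjoint_left.2 fun x hxF hxN ↦ ?_
  have hnonneg : ∀ y ∈ N, 0 ≤ π y := fun y hy ↦ by
    by_cases hyF : y ∈ F
    · exact (hzero y hyF).ge
    · exact (hpos y ⟨hy, hyF⟩).le
  have hmin : IsLocalMin π x := by
    filter_upwards [mem_interior_iff_mem_nhds.1 hxN] with y hy
    exact (hzero x hxF).trans_le (hnonneg y hy)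
  obtain ⟨y, hy⟩ : (N \ F).Nonempty := Set.nonempty_of_ssubset (hFN.ssubset_of_ne hne)
  exact (hpos y hy).ne' ((affineMap_apply_eq_of_isLocalMin hmin y).trans (hzero x hxF))

theorem IsConvexCover.toR_notMem_interior_newton {p : MvPolynomial (Fin n) ℝ}
    (hp : IsConvexCover p) {a : Fin n →₀ ℕ} (ha : a ∈ p.support) :
    toR a ∉ interior (newton p) := by
  obtain ⟨u, F, hF, -, hcover⟩ := hp
  obtain ⟨i, hi⟩ := Set.mem_iUnion.1 (hcover (Set.mem_image_of_mem toR ha))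
  exact Set.disjoint_left.1 (hF i).disjoint_interior hi

end Faces

section SumMonomial

theorem coe_support_sum_monomial {σ R ι : Type*} [CommSemiring R] [Fintype ι] {e : ι → σ →₀ ℕ}
    {c : ι → R} (he : Function.Injective e) (hc : ∀ i, c i ≠ 0) :
    ((∑ i, monomial (e i) (c i)).support : Set (σ →₀ ℕ)) = Set.range e := by
  classical
  ext a
  rw [Finset.mem_coe, mem_support_iff, coeff_sum]
  simp only [coeff_monomial, Set.mem_range]
  refine ⟨fun ha ↦ ?_, ?_⟩
  · obtain ⟨i, -, hi⟩ := Finset.exists_ne_zero_of_sum_ne_zero ha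
    exact ⟨i, (ite_ne_right_iff.1 hi).1⟩
  · rintro ⟨i, rfl⟩
    simpa [he.eq_iff] using hc i

theorem newton_sum_monomial {n : ℕ} {ι : Type*} [Fintype ι] {e : ι → Fin n →₀ ℕ} {c : ι → ℝ}
    (he : Function.Injective e) (hc : ∀ i, c i ≠ 0) :
    newton (∑ i, monomial (e i) (c i)) = convexHull ℝ (Set.range fun i ↦ toR (e i)) := by
  rw [newton, coe_support_sum_monomial he hc, ← Set.range_comp, Function.comp_def]

end SumMonomial

section Simplex

theorem convexHull_insert_eq_of_mem {𝕜 E : Type*} [Semiring 𝕜] [PartialOrder 𝕜] [AddCommMonoid E]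
    [Module 𝕜 E] {s : Set E} {x : E} (hx : x ∈ convexHull 𝕜 s) :
    convexHull 𝕜 (insert x s) = convexHull 𝕜 s :=
  (convexHull_min (Set.insert_subset hx (subset_convexHull 𝕜 s)) (convex_convexHull 𝕜 s)).antisymm
    (convexHull_mono (Set.subset_insert x s))

theorem centroid_mem_interior_convexHull_of_affineIndependent {E ι : Type*} [NormedAddCommGroup E]
    [NormedSpace ℝ E] [FiniteDimensional ℝ E] [Fintype ι] {v : ι → E}
    (hv : AffineIndependent ℝ v) (hcard : Fintype.card ι = Module.finrank ℝ E + 1) :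
    Finset.univ.centroid ℝ v ∈ interior (convexHull ℝ (Set.range v)) :=
  AffineBasis.centroid_mem_interior_convexHull
    ⟨v, hv, hv.affineSpan_eq_top_iff_card_eq_finrank_add_one.2 hcard⟩

end Simplex

section Motzkin

/-- The Motzkin polynomial, a nonnegative polynomial that is not a sum of squares. -/
noncomputable def motzkin : MvPolynomial (Fin 2) ℝ :=
  X 0 ^ 4 * X 1 ^ 2 + X 0 ^ 2 * X 1 ^ 4 - 3 * X 0 ^ 2 * X 1 ^ 2 + 1

/-- The exponent vector of the monomial `x₁ᵃ x₂ᵇ`; the variable `xᵢ` has index `i - 1`. -/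
noncomputable def bidegree (a b : ℕ) : Fin 2 →₀ ℕ := Finsupp.single 0 a + Finsupp.single 1 b

theorem bidegree_inj {a b c d : ℕ} : bidegree a b = bidegree c d ↔ a = c ∧ b = d := by
  simp [bidegree, DFunLike.ext_iff, Fin.forall_fin_two]

theorem toR_bidegree (a b : ℕ) : toR (bidegree a b) = ![(a : ℝ), (b : ℝ)] := by
  ext i
  fin_cases i <;> simp [toR, bidegree]

theorem monomial_bidegree {R : Type*} [CommSemiring R] (a b : ℕ) (c : R) :
    monomial (bidegree a b) c = C c * (X 0 ^ a * X 1 ^ b) := by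
  simp only [bidegree, X_pow_eq_monomial, monomial_mul, C_mul_monomial, mul_one]

/-- The exponent vectors of the monomials of the Motzkin polynomial, the barycenter of the others
coming first. -/
noncomputable def motzkinExponent : Fin 4 → Fin 2 →₀ ℕ :=
  ![bidegree 2 2, bidegree 0 0, bidegree 4 2, bidegree 2 4]

/-- The coefficients of the Motzkin polynomial, indexed like `motzkinExponent`. -/
def motzkinCoeff : Fin 4 → ℝ := ![-3, 1, 1, 1]

/-- The vertices of the Newton polytope of the Motzkin polynomial, ordered as in the
tail of `motzkinExponent`. -/
def motzkinVertex : Fin 3 → Fin 2 → ℝ := ![![0, 0], ![4, 2], ![2, 4]]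

theorem motzkin_eq_sum_monomial :
    motzkin = ∑ i, monomial (motzkinExponent i) (motzkinCoeff i) := by
  simp only [motzkin, motzkinExponent, motzkinCoeff, Fin.sum_univ_four, Matrix.cons_val,
    monomial_bidegree, map_neg, map_one, map_ofNat]
  ring

theorem motzkinExponent_injective : Function.Injective motzkinExponent := by
  intro i j
  fin_cases i <;> fin_cases j <;> simp [motzkinExponent, bidegree_inj]

theorem motzkinCoeff_ne_zero (i : Fin 4) : motzkinCoeff i ≠ 0 := by
  fin_cases i <;> simp [motzkinCoeff]

theorem range_motzkinVertex :
    Set.range motzkinVertex = {![(0 : ℝ), 0], ![4, 2], ![2, 4]} := by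
  simp only [motzkinVertex, Matrix.range_cons, Matrix.range_empty, Set.union_empty,
    Set.singleton_union]

theorem affineIndependent_motzkinVertex : AffineIndependent ℝ motzkinVertex := by
  rw [affineIndependent_iff_of_fintype]
  intro w hw hcomb
  rw [Finset.weightedVSub_eq_linear_combination _ hw] at hcomb
  rw [Fin.sum_univ_three] at hw
  have hfst : w 1 * 4 + w 2 * 2 = 0 := by
    simpa [motzkinVertex, Fin.sum_univ_three] using congrFun hcomb 0
  have hsnd : w 1 * 2 + w 2 * 4 = 0 := by
    simpa [motzkinVertex, Fin.sum_univ_three] using congrFun hcomb 1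
  refine fun | 0 => ?_ | 1 => ?_ | 2 => ?_ <;> linarith

theorem centroid_motzkinVertex : Finset.univ.centroid ℝ motzkinVertex = toR (bidegree 2 2) := by
  rw [Finset.centroid_eq_centerMass _ Finset.univ_nonempty, toR_bidegree]
  ext i
  fin_cases i <;>
    simp [motzkinVertex, Finset.centerMass, Finset.centroidWeights, Fin.sum_univ_three] <;> norm_num

theorem toR_bidegree_mem_interior_convexHull_motzkinVertex :
    toR (bidegree 2 2) ∈ interior (convexHull ℝ (Set.range motzkinVertex)) :=
  centroid_motzkinVertex ▸ centroid_mem_interior_convexHull_of_affineIndependent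
    affineIndependent_motzkinVertex (by simp)

theorem bidegree_mem_support_motzkin : bidegree 2 2 ∈ motzkin.support := by
  rw [← Finset.mem_coe, motzkin_eq_sum_monomial,
    coe_support_sum_monomial motzkinExponent_injective motzkinCoeff_ne_zero]
  exact ⟨0, rfl⟩

theorem range_toR_motzkinExponent :
    (Set.range fun i ↦ toR (motzkinExponent i)) =
      insert (toR (bidegree 2 2)) (Set.range motzkinVertex) := by
  have hcons : (fun i ↦ toR (motzkinExponent i)) =
      Fin.cons (toR (bidegree 2 2)) motzkinVertex := by
    ext i
    fin_cases i <;> simp [motzkinExponent, motzkinVertex, toR_bidegree]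
  rw [hcons, Fin.range_cons]

theorem newton_motzkin : newton motzkin = convexHull ℝ (Set.range motzkinVertex) := by
  rw [motzkin_eq_sum_monomial, newton_sum_monomial motzkinExponent_injective motzkinCoeff_ne_zero,
    range_toR_motzkinExponent, convexHull_insert_eq_of_mem
      (interior_subset toR_bidegree_mem_interior_convexHull_motzkinVertex)]

end Motzkin

/-- The Motzkin polynomial is not a convex cover polynomial; its support point `(2,2)` lies in
the interior of its Newton polytope `conv{(0,0),(4,2),(2,4)}`. -/
theorem statement17 :
    let f : MvPolynomial (Fin 2) ℝ :=
      (X 0) ^ 4 * (X 1) ^ 2 + (X 0) ^ 2 * (X 1) ^ 4 - 3 * (X 0) ^ 2 * (X 1) ^ 2 + 1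
    let e : Fin 2 →₀ ℕ := Finsupp.single 0 2 + Finsupp.single 1 2
    ¬ IsConvexCover f ∧
    e ∈ f.support ∧
    toR e ∈ interior (newton f) ∧
    newton f = convexHull ℝ {![(0 : ℝ), 0], ![4, 2], ![2, 4]} := by
  intro f e
  have hsupport : e ∈ f.support := bidegree_mem_support_motzkin
  have hinterior : toR e ∈ interior (newton f) :=
    newton_motzkin ▸ toR_bidegree_mem_interior_convexHull_motzkinVertex
  exact ⟨fun hf ↦ hf.toR_notMem_interior_newton hsupport hinterior, hsupport, hinterior,
    newton_motzkin.trans (congrArg _ range_motzkinVertex)⟩
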